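/- Let (X, 𝒜, λ) be a finite measure space, (Ω, ℱ, ℙ) a probability space, and P : X × Ω → [0,1] a jointly measurable function. Define p(x) = ∫_Ω P(x,ω) dℙ(ω), the set B = {x ∈ X : p(x) > 1/2}, and for each ω the set B'(ω) = {x ∈ X : P(x,ω) > 1/2}. Then ∫_X min(p(x), 1−p(x)) dλ(x) − ∫_Ω ∫_X min(P(x,ω), 1−P(x,ω)) dλ(x) dℙ(ω) = ∫_Ω ∫_X |2P(x,ω)−1| · 𝟙_{B Δ B'(ω)}(x) dλ(x) dℙ(ω), where A Δ B = (A \ B) ∪ (B \ A) denotes the symmetric difference of sets. -/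

import Mathlib

open MeasureTheory

/-- integrated form of Proposition 2.1. With `p(x) = ∫ P(x,ω) dℙ(ω)`,
`B = {x : p(x) > 1/2}` and `B'(ω) = {x : P(x,ω) > 1/2}`,
`∫ min(p,1−p) dλ − ∫∫ min(P,1−P) dλ dℙ = ∫∫ |2P−1|·𝟙_{B Δ B'(ω)} dλ dℙ`. -/
theorem stmt_2 {X Ω : Type*} [MeasurableSpace X] [MeasurableSpace Ω]
    (ν : Measure X) [IsFiniteMeasure ν] (μ : Measure Ω) [IsProbabilityMeasure μ]
    (P : X × Ω → ℝ) (hP : Measurable P) (hP01 : ∀ z, P z ∈ Set.Icc (0:ℝ) 1) :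
    (∫ x, min (∫ ω, P (x, ω) ∂μ) (1 - ∫ ω, P (x, ω) ∂μ) ∂ν)
        - ∫ ω, (∫ x, min (P (x, ω)) (1 - P (x, ω)) ∂ν) ∂μ
      = ∫ ω, (∫ x, |2 * P (x, ω) - 1| *
          Set.indicator
            (symmDiff {x' | (∫ ω', P (x', ω') ∂μ) > 1/2} {x' | P (x', ω) > 1/2})
            (fun _ => (1:ℝ)) x ∂ν) ∂μ := by
  have hpm : Measurable fun x => ∫ ω, P (x, ω) ∂μ :=
    (hP.stronglyMeasurable.integral_prod_right' (ν := μ)).measurable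
  have hB : MeasurableSet {z : X × Ω | (∫ ω', P (z.1, ω') ∂μ) > 1/2} :=
    measurableSet_lt measurable_const (hpm.comp measurable_fst)
  set g : X × Ω → ℝ := fun z => if (∫ ω', P (z.1, ω') ∂μ) > 1/2 then 1 - P z else P z with hg
  have hgm : Measurable g := Measurable.ite hB (measurable_const.sub hP) hP
  have hmm : Measurable fun z : X × Ω => min (P z) (1 - P z) :=
    hP.min (measurable_const.sub hP)
  have hgi : Integrable g (ν.prod μ) := by
    refine Integrable.of_bound hgm.aestronglyMeasurable 1 (Filter.Eventually.of_forall fun z => ?_)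
    have h := hP01 z
    rw [Real.norm_eq_abs, abs_le]
    simp only [hg]
    split_ifs <;> constructor <;> linarith [h.1, h.2]
  have hmi : Integrable (fun z : X × Ω => min (P z) (1 - P z)) (ν.prod μ) := by
    refine Integrable.of_bound hmm.aestronglyMeasurable 1 (Filter.Eventually.of_forall fun z => ?_)
    have h := hP01 z
    rw [Real.norm_eq_abs, abs_le]
    rcases min_cases (P z) (1 - P z) with h' | h' <;> constructor <;> linarith [h.1, h.2]
  have hPx : ∀ x, Integrable (fun ω => P (x, ω)) μ := by
    intro x
    refine Integrable.of_bound (hP.comp measurable_prodMk_left).aestronglyMeasurable 1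
      (Filter.Eventually.of_forall fun ω => ?_)
    have h := hP01 (x, ω)
    rw [Real.norm_eq_abs, abs_le]
    constructor <;> linarith [h.1, h.2]
  have h1 : ∀ x, min (∫ ω, P (x, ω) ∂μ) (1 - ∫ ω, P (x, ω) ∂μ) = ∫ ω, g (x, ω) ∂μ := by
    intro x
    by_cases hx : (∫ ω', P (x, ω') ∂μ) > 1/2
    · simp only [hg, hx, if_true]
      rw [integral_sub (integrable_const _) (hPx x), min_eq_right (by linarith)]
      simp
    · simp only [hg, hx, if_false]
      rw [min_eq_left (by linarith)]
  have h2 : ∀ ω x, |2 * P (x, ω) - 1| *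
          Set.indicator
            (symmDiff {x' | (∫ ω', P (x', ω') ∂μ) > 1/2} {x' | P (x', ω) > 1/2})
            (fun _ => (1:ℝ)) x = g (x, ω) - min (P (x, ω)) (1 - P (x, ω)) := by
    intro ω x
    by_cases hx : (∫ ω', P (x, ω') ∂μ) > 1/2 <;> by_cases hy : P (x, ω) > 1/2
    · simp only [Set.indicator, Set.mem_symmDiff, Set.mem_ofPred_eq, hg, hx, hy]
      rw [min_eq_right (by linarith)]
      simp
    · simp only [Set.indicator, Set.mem_symmDiff, Set.mem_ofPred_eq, hg, hx, hy]
      rw [min_eq_left (by linarith), abs_of_nonpos (by linarith)]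
      simp
      ring
    · simp only [Set.indicator, Set.mem_symmDiff, Set.mem_ofPred_eq, hg, hx, hy]
      rw [min_eq_right (by linarith), abs_of_nonneg (by linarith)]
      simp
      ring
    · simp only [Set.indicator, Set.mem_symmDiff, Set.mem_ofPred_eq, hg, hx, hy]
      rw [min_eq_left (by linarith)]
      simp
  simp_rw [h1, h2]
  rw [integral_integral_swap (f := fun x ω => g (x, ω)) hgi]
  rw [← integral_sub hgi.integral_prod_right hmi.integral_prod_right]
  refine integral_congr_ae ?_
  filter_upwards [hgi.prod_left_ae, hmi.prod_left_ae] with ω ha hb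
  exact (integral_sub ha hb).symm
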